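/- arXiv:2408.10928 — 2 statements merged into one kernel-verified Lean document; each statement's English description precedes it below -/
import Mathlib

section
/- Let R be an associative unital ring and let 0 → F → P → F → 0 be a short exact sequence of left R-modules in which F is flat and P is projective. Then F is projective. -/
universe v u

/-- A left module `M` over a ring `R` is *flat* if it satisfies Villamayor's equational
criterion of flatness: every finite linear relation `∑ rᵢ • xᵢ = 0` in `M` factors
trivially.  Over an arbitrary associative unital ring this is equivalent to the usual
definition of flatness (exactness of the tensor product functor `− ⊗_R M` on right
`R`-modules). -/
def Module.IsFlat (R : Type u) [Ring R] (M : Type v) [AddCommGroup M] [Module R M] : Prop :=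
  ∀ (n : ℕ) (r : Fin n → R) (x : Fin n → M), ∑ i, r i • x i = 0 →
    ∃ (m : ℕ) (a : Fin n → Fin m → R) (y : Fin m → M),
      (∀ i, x i = ∑ j, a i j • y j) ∧ ∀ j, ∑ i, r i * a i j = 0

/-!
The composite `d = i ∘ p` is a differential on `P` (that is, `d * d = 0`), and `F` is projective as
soon as `d` has a contracting homotopy `h`, since then `p ∘ h` is a retraction of `i`. If `F` is
flat, Villamayor's criterion contracts any single element of `P`. If `h` has the defect
`φ = 1 - (d * h + h * d)`, replacing `h` by `h + k * φ` multiplies `φ` by the defect of `k` on the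
left, so further elements can be contracted without changing `h` where it already works; countably
generated pieces are contracted in this way. In general, Zorn's lemma gives a maximal partial
contraction whose domain is a direct summand, so that it extends to an `H` defined on all of `P`.
The defect `φ` of `H` vanishes on the domain, so the domain can be enlarged by any countably
generated piece that is closed under countably many suitable corrections `k * φ`.
-/

theorem exists_countable_closed_set {α : Type*} (op : Finset α → α → Set α)
    (hop : ∀ T x, (op T x).Countable) (a : α) :
    ∃ D : Set α, D.Countable ∧ a ∈ D ∧ ∀ T : Finset α, ↑T ⊆ D → ∀ x ∈ D, op T x ⊆ D := by
  let next (S : Set α) : Set α := S ∪ ⋃ T ∈ {T : Finset α | ↑T ⊆ S}, ⋃ x ∈ S, op T x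
  have next_countable {S : Set α} (hS : S.Countable) : (next S).Countable := by
    have hT : {T : Finset α | ↑T ⊆ S}.Countable :=
      ((Set.countable_ofPred_finite_subset hS).preimage Finset.coe_injective).mono
        fun T hT ↦ And.intro T.finite_toSet hT
    exact hS.union (hT.biUnion fun T _ ↦ hS.biUnion fun x _ ↦ hop T x)
  let stage (n : ℕ) : Set α := next^[n] {a}
  have stage_succ (n : ℕ) : stage (n + 1) = next (stage n) := Function.iterate_succ_apply' ..
  have stage_mono : Monotone stage := monotone_nat_of_le_succ fun n ↦ by
    rw [stage_succ]
    exact Set.subset_union_left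
  have stage_countable (n : ℕ) : (stage n).Countable := by
    induction n with
    | zero => exact Set.countable_singleton a
    | succ n ih => exact stage_succ n ▸ next_countable ih
  refine ⟨⋃ n, stage n, Set.countable_iUnion stage_countable, Set.mem_iUnion_of_mem 0 rfl,
    fun T hT x hx ↦ ?_⟩
  obtain ⟨n, hn⟩ :=
    stage_mono.directed_le.exists_mem_subset_of_finset_subset_biUnion hT
  obtain ⟨m, hm⟩ := Set.mem_iUnion.1 hx
  have hTx : op T x ⊆ next (stage (max n m)) := fun y hy ↦ Or.inr <| Set.mem_biUnion
    (hn.trans (stage_mono (le_max_left n m)))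
    (Set.mem_biUnion (stage_mono (le_max_right n m) hm) hy)
  exact hTx.trans (stage_succ _ ▸ Set.subset_iUnion stage _)

section

variable {R : Type*} [Ring R] {M N : Type*} [AddCommGroup M] [Module R M] [AddCommGroup N]
  [Module R N] {d : Module.End R M}

theorem exists_linearMap_eqOn_of_iSup_eq_top {ι : Type*} [Nonempty ι] (K : ι → Submodule R M)
    (f : ι → M →ₗ[R] N) (hdir : Directed (· ≤ ·) fun i ↦ (f i).toPMap (K i))
    (hK : ⨆ i, K i = ⊤) : ∃ g : M →ₗ[R] N, ∀ i, Set.EqOn g (f i) (K i) := by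
  have hdir' := hdir.directedOn_range
  set G := LinearPMap.sSup _ hdir'
  have hle (i : ι) : (f i).toPMap (K i) ≤ G := LinearPMap.le_sSup hdir' ⟨i, rfl⟩
  have hG (x : M) : x ∈ G.domain :=
    (iSup_le fun i ↦ (hle i).1 : ⨆ i, K i ≤ G.domain) (hK ▸ Submodule.mem_top)
  exact ⟨G.toFun ∘ₗ LinearMap.id.codRestrict G.domain hG,
    fun i x hx ↦ ((hle i).2 (x := ⟨x, hx⟩) (y := ⟨x, hG x⟩) rfl).symm⟩

theorem exists_retraction_of_le_comap_supported {s : M →ₗ[R] M →₀ R}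
    (hs : Finsupp.linearCombination R id ∘ₗ s = LinearMap.id) {K : Submodule R M}
    (hK : K ≤ (Finsupp.supported R R (K : Set M)).comap s) :
    ∃ r : M →ₗ[R] K, ∀ x : K, r x = x := by
  classical
  let r := Finsupp.linearCombination R (fun y ↦ if hy : y ∈ K then (⟨y, hy⟩ : K) else 0) ∘ₗ s
  refine ⟨r, fun x ↦ Subtype.ext ?_⟩
  calc (r x : M) = ∑ y ∈ (s x).support, s x y • y := by
        simp only [r, LinearMap.comp_apply, Finsupp.linearCombination_apply, Finsupp.sum,
          AddSubmonoidClass.coe_finsetSum, Submodule.coe_smul]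
        refine Finset.sum_congr rfl fun y hy ↦ ?_
        rw [dif_pos (show y ∈ K from hK x.2 hy)]
    _ = x := LinearMap.congr_fun hs x

theorem exists_factorization_of_isFlat (hM : Module.IsFlat R M) {ι : Type*} (S : Finset ι)
    (r : ι → R) (x : ι → M) (hrx : ∑ i ∈ S, r i • x i = 0) :
    ∃ (m : ℕ) (a : ι → Fin m → R) (y : Fin m → M),
      (∀ i ∈ S, x i = ∑ j, a i j • y j) ∧ ∀ j, ∑ i ∈ S, r i * a i j = 0 := by
  classical
  obtain ⟨m, a, y, hxy, hra⟩ := hM S.card (fun k ↦ r (S.equivFin.symm k))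
    (fun k ↦ x (S.equivFin.symm k)) (by
      rwa [Equiv.sum_comp S.equivFin.symm fun i : S ↦ r i • x i,
        Finset.sum_coe_sort S fun i ↦ r i • x i])
  refine ⟨m, fun i j ↦ if hi : i ∈ S then a (S.equivFin ⟨i, hi⟩) j else 0, y,
    fun i hi ↦ ?_, fun j ↦ ?_⟩
  · simpa [hi] using hxy (S.equivFin ⟨i, hi⟩)
  · rw [← Finset.sum_coe_sort S, ← Equiv.sum_comp S.equivFin.symm]
    simpa using hra j

theorem exists_end_fixing_of_isFlat [Module.Projective R M] (hN : Module.IsFlat R N)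
    {p : M →ₗ[R] N} (hp : Function.Surjective p) {z : M} (hz : p z = 0) :
    ∃ θ : Module.End R M, (∀ x, p (θ x) = 0) ∧ θ z = z := by
  classical
  obtain ⟨s, hs⟩ := Module.projective_def'.1 ‹Module.Projective R M›
  have sum_smul_eq : ∑ y ∈ (s z).support, s z y • y = z := LinearMap.congr_fun hs z
  have relation : ∑ y ∈ (s z).support, s z y • p y = 0 := by
    simpa only [map_sum, map_smul, hz] using congrArg p sum_smul_eq
  obtain ⟨m, a, f, hf, hsa⟩ := exists_factorization_of_isFlat hN _ _ _ relation
  choose g hg using fun j ↦ hp (f j)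
  let c (y : M) : M := if y ∈ (s z).support then y - ∑ j, a y j • g j else 0
  have p_c (y : M) : p (c y) = 0 := by
    by_cases hy : y ∈ (s z).support
    · simp only [c, if_pos hy, map_sub, map_sum, map_smul, hg, ← hf y hy, sub_self]
    · simp only [c, if_neg hy, map_zero]
  refine ⟨Finsupp.linearCombination R c ∘ₗ s, fun x ↦ ?_, ?_⟩
  · simp only [LinearMap.comp_apply, Finsupp.linearCombination_apply, Finsupp.sum, map_sum,
      map_smul, p_c, smul_zero, Finset.sum_const_zero]
  · calc ∑ y ∈ (s z).support, s z y • c y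
        = ∑ y ∈ (s z).support, (s z y • y - ∑ j, (s z y * a y j) • g j) :=
          Finset.sum_congr rfl fun y hy ↦ by
            simp only [c, if_pos hy, smul_sub, Finset.smul_sum, mul_smul]
      _ = z - ∑ j, (∑ y ∈ (s z).support, s z y * a y j) • g j := by
          rw [Finset.sum_sub_distrib, sum_smul_eq, Finset.sum_comm]
          simp only [Finset.sum_smul]
      _ = z := by simp only [hsa, zero_smul, Finset.sum_const_zero, sub_zero]

/-- The failure of `h` to be a contracting homotopy for the differential `d`: the module is
regarded as a one-term periodic complex, and `h` contracts it when the defect vanishes. -/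
def homotopyDefect (d h : Module.End R M) : Module.End R M :=
  1 - (d * h + h * d)

theorem homotopyDefect_apply (d h : Module.End R M) (x : M) :
    homotopyDefect d h x = x - (d (h x) + h (d x)) := rfl

theorem mem_ker_homotopyDefect {h : Module.End R M} {x : M} :
    x ∈ (homotopyDefect d h).ker ↔ d (h x) + h (d x) = x := by
  rw [LinearMap.mem_ker, homotopyDefect_apply, sub_eq_zero, eq_comm]

theorem commute_homotopyDefect (hd : d * d = 0) (h : Module.End R M) :
    Commute d (homotopyDefect d h) := by
  simp only [Commute, SemiconjBy, homotopyDefect, mul_sub, sub_mul, mul_add, add_mul, mul_one,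
    one_mul, ← mul_assoc, hd, zero_mul]
  simp only [mul_assoc, hd, mul_zero, zero_add, add_zero]

theorem homotopyDefect_add_mul (hd : d * d = 0) (h k : Module.End R M) :
    homotopyDefect d (h + k * homotopyDefect d h) = homotopyDefect d k * homotopyDefect d h := by
  have hcomm := (commute_homotopyDefect hd h).eq
  calc homotopyDefect d (h + k * homotopyDefect d h)
      = homotopyDefect d h - (d * k * homotopyDefect d h + k * (homotopyDefect d h * d)) := by
        simp only [homotopyDefect]; noncomm_ring
    _ = homotopyDefect d k * homotopyDefect d h := by
        rw [← hcomm]; simp only [homotopyDefect]; noncomm_ring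

/-- A differential is locally contractible if each element is contracted by some endomorphism of
the whole module, which may depend on the element. -/
def IsLocallyContractible (d : Module.End R M) : Prop :=
  ∀ x, ∃ h, homotopyDefect d h x = 0

/-- The restriction of `h` to the elements it contracts. In the order on partial maps,
`contractedPart d h ≤ contractedPart d h'` says that `h'` contracts whatever `h` does, and agrees
with `h` there. -/
def contractedPart (d h : Module.End R M) : M →ₗ.[R] M :=
  h.toPMap (homotopyDefect d h).ker

theorem contractedPart_le_add_mul (hd : d * d = 0) (h k : Module.End R M) :
    contractedPart d h ≤ contractedPart d (h + k * homotopyDefect d h) := by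
  refine ⟨fun x hx ↦ ?_, fun x y hxy ↦ ?_⟩
  · change homotopyDefect d _ x = 0
    rw [homotopyDefect_add_mul hd, Module.End.mul_apply, show homotopyDefect d h x = 0 from hx,
      map_zero]
  · change h x = h y + k (homotopyDefect d h y)
    rw [← hxy, show homotopyDefect d h x = 0 from x.2, map_zero, add_zero]

namespace IsLocallyContractible

theorem exists_contractedPart_le (hloc : IsLocallyContractible d) (hd : d * d = 0)
    (h : Module.End R M) (x : M) :
    ∃ h', contractedPart d h ≤ contractedPart d h' ∧ homotopyDefect d h' x = 0 := by
  obtain ⟨k, hk⟩ := hloc (homotopyDefect d h x)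
  refine ⟨h + k * homotopyDefect d h, contractedPart_le_add_mul hd h k, ?_⟩
  rw [homotopyDefect_add_mul hd, Module.End.mul_apply, hk]

theorem exists_contracting_finset (hloc : IsLocallyContractible d) (hd : d * d = 0)
    (T : Finset M) : ∃ h, ∀ x ∈ T, homotopyDefect d h x = 0 := by
  classical
  induction T using Finset.induction_on with
  | empty => exact ⟨0, by simp⟩
  | insert a T _ ih =>
    obtain ⟨h, hT⟩ := ih
    obtain ⟨h', hle, ha⟩ := hloc.exists_contractedPart_le hd h a
    exact ⟨h', fun x hx ↦ (Finset.mem_insert.1 hx).elim (· ▸ ha) fun hx ↦ hle.1 (hT x hx)⟩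

theorem exists_homotopyDefect_eq_zero_eqOn (hloc : IsLocallyContractible d) (hd : d * d = 0)
    (h₀ : Module.End R M) {S : Set M} (hS : S.Countable)
    (hspan : (homotopyDefect d h₀).ker ⊔ Submodule.span R S = ⊤) :
    ∃ h, homotopyDefect d h = 0 ∧ Set.EqOn h h₀ (homotopyDefect d h₀).ker := by
  obtain ⟨e, he⟩ := (hS.insert 0).exists_eq_range (Set.insert_nonempty 0 S)
  choose next le_next next_contracts using hloc.exists_contractedPart_le hd
  let H (n : ℕ) : Module.End R M := Nat.rec h₀ (fun n h ↦ next h (e n)) n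
  let K (n : ℕ) : Submodule R M := (homotopyDefect d (H n)).ker
  have H_mono : Monotone fun n ↦ contractedPart d (H n) :=
    monotone_nat_of_le_succ fun n ↦ le_next (H n) (e n)
  have K_top : ⨆ n, K n = ⊤ := by
    rw [eq_top_iff, ← hspan, sup_le_iff, Submodule.span_le]
    refine ⟨le_iSup K 0, fun x hx ↦ ?_⟩
    obtain ⟨n, rfl⟩ : x ∈ Set.range e := he ▸ Set.mem_insert_of_mem 0 hx
    exact le_iSup K (n + 1) (next_contracts (H n) (e n))
  obtain ⟨h, hh⟩ := exists_linearMap_eqOn_of_iSup_eq_top K H H_mono.directed_le K_top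
  refine ⟨h, LinearMap.ext fun x ↦ ?_, hh 0⟩
  obtain ⟨n, hx⟩ := (Submodule.mem_iSup_of_directed K
    (H_mono.directed_le.mono_comp _ fun _ _ hle ↦ hle.1)).1
    (K_top ▸ Submodule.mem_top : x ∈ ⨆ n, K n)
  have hdx : d x ∈ K n := by
    change (homotopyDefect d (H n) * d) x = 0
    rw [← (commute_homotopyDefect hd _).eq, Module.End.mul_apply,
      show homotopyDefect d (H n) x = 0 from hx, map_zero]
  rw [homotopyDefect_apply, hh n hx, hh n hdx]
  exact hx

end IsLocallyContractible

/-- A set `D` is correcting for `H` if any finite part of it is contracted by a modification of `H`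
of the form provided by `homotopyDefect_add_mul`, with a correction term that maps `D` to `D`. -/
def IsCorrecting (d H : Module.End R M) (D : Set M) : Prop :=
  ∀ T : Finset M, ↑T ⊆ D → ∃ k : Module.End R M, (∀ x ∈ D, k (homotopyDefect d H x) ∈ D) ∧
    ∀ x ∈ T, homotopyDefect d (H + k * homotopyDefect d H) x = 0

theorem exists_countable_isCorrecting (hloc : IsLocallyContractible d) (hd : d * d = 0)
    (H : Module.End R M) {op : M → Set M} (hop : ∀ x, (op x).Countable) (a : M) :
    ∃ D : Set M, D.Countable ∧ a ∈ D ∧ (∀ x ∈ D, op x ⊆ D) ∧ IsCorrecting d H D := by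
  classical
  choose k hk using fun T : Finset M ↦
    hloc.exists_contracting_finset hd (T.image (homotopyDefect d H))
  obtain ⟨D, hD, ha, hclosed⟩ := exists_countable_closed_set
    (fun T x ↦ op x ∪ {k T (homotopyDefect d H x)})
    (fun T x ↦ (hop x).union (Set.countable_singleton _)) a
  refine ⟨D, hD, ha, fun x hx ↦ Set.subset_union_left.trans (hclosed ∅ (by simp) x hx),
    fun T hT ↦ ⟨k T, fun x hx ↦ hclosed T hT x hx (Or.inr rfl), fun x hx ↦ ?_⟩⟩
  rw [homotopyDefect_add_mul hd]
  exact hk T _ (Finset.mem_image_of_mem _ hx)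

theorem IsCorrecting.isLocallyContractible_restrict {H : Module.End R M} {D : Set M}
    (hD : IsCorrecting d H D) (hd : d * d = 0) {K : Submodule R M} (hHK : ∀ x, H x ∈ K)
    (hK : K ≤ (homotopyDefect d H).ker)
    (hdL : ∀ x ∈ K ⊔ Submodule.span R D, d x ∈ K ⊔ Submodule.span R D) :
    IsLocallyContractible (d.restrict hdL) := by
  rintro ⟨x, hx⟩
  obtain ⟨y, hy, z, hz, rfl⟩ := Submodule.mem_sup.1 hx
  obtain ⟨T, hTD, hzT⟩ := Submodule.mem_span_finite_of_mem_span hz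
  obtain ⟨k, hkD, hkT⟩ := hD T hTD
  set h := H + k * homotopyDefect d H with h_def
  have hL : K ⊔ Submodule.span R D ≤ (K ⊔ Submodule.span R D).comap h := by
    refine sup_le (fun w hw ↦ ?_) (Submodule.span_le.2 fun w hw ↦ ?_)
    · have hw₀ : homotopyDefect d H w = 0 := hK hw
      simpa [h_def, hw₀] using Submodule.mem_sup_left (hHK w)
    · exact add_mem (Submodule.mem_sup_left (hHK w))
        (Submodule.mem_sup_right (Submodule.subset_span (hkD w hw)))
  refine ⟨h.restrict hL, Subtype.ext ?_⟩
  have hy₀ : homotopyDefect d h y = 0 := (contractedPart_le_add_mul hd H k).1 (hK hy)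
  have hz₀ : homotopyDefect d h z = 0 :=
    (Submodule.span_le.2 hkT : Submodule.span R T ≤ (homotopyDefect d h).ker) hzT
  change homotopyDefect d h (y + z) = 0
  rw [map_add, hy₀, hz₀, add_zero]

/-- A partial contraction of `d` is a partial map that contracts its own domain. The domain is
required to contain, with each `x`, the support of `s x`; when `s` is a section of
`Finsupp.linearCombination R id`, this makes the domain a direct summand. -/
structure IsPartialContraction (s : M →ₗ[R] M →₀ R) (d : Module.End R M) (f : M →ₗ.[R] M) :
    Prop where
  domain_le_comap : f.domain ≤ f.domain.comap d
  domain_le_comap_supported : f.domain ≤ (Finsupp.supported R R (f.domain : Set M)).comap s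
  apply_mem (x : f.domain) : f x ∈ f.domain
  map_apply_add_apply_map (x : f.domain) : d (f x) + f ⟨d x, domain_le_comap x.2⟩ = x

namespace IsPartialContraction

variable {s : M →ₗ[R] M →₀ R} {f : M →ₗ.[R] M}

protected theorem bot : IsPartialContraction s d ⊥ where
  domain_le_comap := bot_le
  domain_le_comap_supported := bot_le
  apply_mem _ := zero_mem _
  map_apply_add_apply_map x :=
    (add_zero (d 0)).trans <| (map_zero d).trans ((Submodule.mem_bot R).1 x.2).symm

protected theorem sSup {c : Set (M →ₗ.[R] M)} (hne : c.Nonempty) (hdir : DirectedOn (· ≤ ·) c)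
    (hc : ∀ f ∈ c, IsPartialContraction s d f) :
    IsPartialContraction s d (LinearPMap.sSup c hdir) := by
  have exists_mem (x : (LinearPMap.sSup c hdir).domain) : ∃ f ∈ c, (x : M) ∈ f.domain :=
    (LinearPMap.mem_domain_sSup_iff hne hdir).1 x.2
  have domain_le {f} (hf : f ∈ c) : f.domain ≤ (LinearPMap.sSup c hdir).domain :=
    (LinearPMap.le_sSup hdir hf).1
  refine ⟨fun x hx ↦ ?_, fun x hx ↦ ?_, fun x ↦ ?_, fun x ↦ ?_⟩
  · obtain ⟨f, hf, hxf⟩ := exists_mem ⟨x, hx⟩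
    exact domain_le hf ((hc f hf).domain_le_comap hxf)
  · obtain ⟨f, hf, hxf⟩ := exists_mem ⟨x, hx⟩
    exact Finsupp.supported_mono (R := R) (domain_le hf) ((hc f hf).domain_le_comap_supported hxf)
  · obtain ⟨f, hf, hxf⟩ := exists_mem x
    rw [LinearPMap.sSup_apply hdir hf ⟨x, hxf⟩]
    exact domain_le hf ((hc f hf).apply_mem _)
  · obtain ⟨f, hf, hxf⟩ := exists_mem x
    rw [LinearPMap.sSup_apply hdir hf ⟨x, hxf⟩,
      LinearPMap.sSup_apply hdir hf ⟨d x, (hc f hf).domain_le_comap hxf⟩]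
    exact (hc f hf).map_apply_add_apply_map ⟨x, hxf⟩

theorem exists_total_extension (hf : IsPartialContraction s d f)
    (hs : Finsupp.linearCombination R id ∘ₗ s = LinearMap.id) :
    ∃ H : Module.End R M, (∀ x, H x ∈ f.domain) ∧ ∀ x : f.domain, H x = f x := by
  obtain ⟨r, hr⟩ := exists_retraction_of_le_comap_supported hs hf.domain_le_comap_supported
  exact ⟨f.toFun ∘ₗ r, fun x ↦ hf.apply_mem (r x), fun x ↦ congrArg f (hr x)⟩

theorem domain_le_ker_homotopyDefect (hf : IsPartialContraction s d f) {H : Module.End R M}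
    (hH : ∀ x : f.domain, H x = f x) : f.domain ≤ (homotopyDefect d H).ker := fun x hx ↦ by
  rw [mem_ker_homotopyDefect, hH ⟨x, hx⟩, hH ⟨d x, hf.domain_le_comap hx⟩]
  exact hf.map_apply_add_apply_map ⟨x, hx⟩

theorem exists_le_domain_eq_sup_span (hf : IsPartialContraction s d f) (hd : d * d = 0)
    {H : Module.End R M} (hH : ∀ x : f.domain, H x = f x) {D : Set M} (hD : D.Countable)
    (hsupp : ∀ x ∈ D, ↑(s x).support ⊆ D)
    (hdL : ∀ x ∈ f.domain ⊔ Submodule.span R D, d x ∈ f.domain ⊔ Submodule.span R D)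
    (hloc : IsLocallyContractible (d.restrict hdL))
    (hHL : ∀ x ∈ f.domain ⊔ Submodule.span R D, H x ∈ f.domain ⊔ Submodule.span R D) :
    ∃ g, IsPartialContraction s d g ∧ f ≤ g ∧ g.domain = f.domain ⊔ Submodule.span R D := by
  set L := f.domain ⊔ Submodule.span R D
  have hfL : f.domain ≤ L := le_sup_left
  have hDL : D ⊆ L := Submodule.subset_span.trans (le_sup_right : _ ≤ L)
  have hker (x : L) (hx : (x : M) ∈ f.domain) :
      x ∈ (homotopyDefect (d.restrict hdL) (H.restrict hHL)).ker :=
    Subtype.ext (hf.domain_le_ker_homotopyDefect hH hx)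
  have hspan : (homotopyDefect (d.restrict hdL) (H.restrict hHL)).ker ⊔
      Submodule.span R (L.subtype ⁻¹' D) = ⊤ := by
    rw [eq_top_iff, ← Submodule.map_le_map_iff_of_injective L.subtype_injective,
      Submodule.map_subtype_top, Submodule.map_sup, Submodule.map_span,
      Set.image_preimage_eq_of_subset (by simpa using hDL)]
    exact sup_le_sup_right (fun x hx ↦ ⟨⟨x, hfL hx⟩, hker _ hx, rfl⟩) _
  obtain ⟨h, hh, hhH⟩ := hloc.exists_homotopyDefect_eq_zero_eqOn (LinearMap.ext fun x ↦ Subtype.ext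
    (LinearMap.congr_fun hd x)) (H.restrict hHL) (hD.preimage L.subtype_injective) hspan
  refine ⟨⟨L, L.subtype ∘ₗ h⟩, ⟨hdL, ?_, fun x ↦ (h x).2, fun x ↦ ?_⟩, ⟨le_sup_left, ?_⟩, rfl⟩
  · refine sup_le (fun x hx ↦ ?_) (Submodule.span_le.2 fun x hx ↦ ?_)
    · exact Finsupp.supported_mono (R := R) hfL (hf.domain_le_comap_supported hx)
    · exact (hsupp x hx).trans hDL
  · exact congrArg Subtype.val (mem_ker_homotopyDefect.1 (LinearMap.congr_fun hh x))
  · rintro x ⟨y, hy⟩ rfl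
    rw [← hH x]
    exact (congrArg Subtype.val (hhH (hker ⟨x, hy⟩ x.2))).symm

theorem exists_le_mem_domain (hf : IsPartialContraction s d f)
    (hs : Finsupp.linearCombination R id ∘ₗ s = LinearMap.id)
    (hloc : IsLocallyContractible d) (hd : d * d = 0) (a : M) :
    ∃ g, IsPartialContraction s d g ∧ f ≤ g ∧ a ∈ g.domain := by
  obtain ⟨H, hHN, hH⟩ := hf.exists_total_extension hs
  obtain ⟨D, hD, ha, hclosed, hcorr⟩ := exists_countable_isCorrecting hloc hd H
    (op := fun x ↦ ↑(s x).support ∪ {d x})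
    (fun x ↦ (s x).support.countable_toSet.union (Set.countable_singleton _)) a
  have hdL : f.domain ⊔ Submodule.span R D ≤ (f.domain ⊔ Submodule.span R D).comap d :=
    sup_le (hf.domain_le_comap.trans (Submodule.comap_mono le_sup_left)) <|
      Submodule.span_le.2 fun x hx ↦
        Submodule.mem_sup_right (Submodule.subset_span (hclosed x hx (Or.inr rfl)))
  obtain ⟨g, hg, hfg, hdom⟩ := hf.exists_le_domain_eq_sup_span hd hH hD
    (fun x hx ↦ Set.subset_union_left.trans (hclosed x hx)) hdL
    (hcorr.isLocallyContractible_restrict hd hHN (hf.domain_le_ker_homotopyDefect hH) hdL)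
    fun x _ ↦ Submodule.mem_sup_left (hHN x)
  exact ⟨g, hg, hfg, hdom ▸ Submodule.mem_sup_right (Submodule.subset_span ha)⟩

end IsPartialContraction

theorem IsLocallyContractible.exists_homotopyDefect_eq_zero [Module.Projective R M]
    (hloc : IsLocallyContractible d) (hd : d * d = 0) : ∃ h, homotopyDefect d h = 0 := by
  obtain ⟨s, hs⟩ := Module.projective_def'.1 ‹Module.Projective R M›
  obtain ⟨f, -, hmax⟩ := zorn_le_nonempty₀ {f | IsPartialContraction s d f}
    (fun c hc hchain g hg ↦ ⟨LinearPMap.sSup c hchain.directedOn,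
      .sSup ⟨g, hg⟩ hchain.directedOn hc, fun _ ↦ LinearPMap.le_sSup hchain.directedOn⟩)
    ⊥ .bot
  have mem_domain (x : M) : x ∈ f.domain := by
    obtain ⟨g, hg, hfg, hx⟩ := IsPartialContraction.exists_le_mem_domain hmax.prop hs hloc hd x
    exact (hmax.le_of_ge hg hfg).1 hx
  obtain ⟨H, -, hH⟩ := hmax.prop.exists_total_extension hs
  exact ⟨H, LinearMap.ext fun x ↦ hmax.prop.domain_le_ker_homotopyDefect hH (mem_domain x)⟩

theorem isLocallyContractible_of_exists_section (hd : d * d = 0)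
    (hsec : ∀ z, d z = 0 → ∃ ψ : Module.End R M, d (ψ z) = z) : IsLocallyContractible d := by
  intro x
  have map_map (y : M) : d (d y) = 0 := LinearMap.congr_fun hd y
  obtain ⟨ψ₁, hψ₁⟩ := hsec (d x) (map_map x)
  set u := x - ψ₁ (d x)
  have hu : d u = 0 := by rw [map_sub, hψ₁, sub_self]
  obtain ⟨c, hc⟩ := hsec (u - d (ψ₁ u)) (by rw [map_sub, hu, map_map, sub_self])
  -- Both `ψ₁` and `ψ` split `d` at `d x`; the term in `c` repairs the splitting at `u`.
  let ψ := ψ₁ + c * (1 - d * ψ₁)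
  have ψ_map : ψ (d x) = ψ₁ (d x) := by simp [ψ, hψ₁]
  have map_ψ : d (ψ u) = u := by simpa [ψ] using congrArg (d (ψ₁ u) + ·) hc
  refine ⟨ψ - ψ * ψ * d, mem_ker_homotopyDefect.2 ?_⟩
  calc d (ψ x - ψ (ψ (d x))) + (ψ (d x) - ψ (ψ (d (d x))))
      = d (ψ u) + ψ₁ (d x) := by
        rw [← map_sub, map_map, map_zero, map_zero, sub_zero, ψ_map]
    _ = x := by rw [map_ψ, sub_add_cancel]

variable {i : N →ₗ[R] M} {p : M →ₗ[R] N}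

theorem comp_mul_comp_eq_zero_of_exact (hexact : Function.Exact i p) :
    (i ∘ₗ p) * (i ∘ₗ p) = (0 : Module.End R M) :=
  LinearMap.ext fun x ↦ (congrArg i (hexact.apply_apply_eq_zero (p x))).trans (map_zero i)

theorem isLocallyContractible_of_exact_of_isFlat [Module.Projective R M]
    (hi : Function.Injective i) (hp : Function.Surjective p) (hexact : Function.Exact i p)
    (hN : Module.IsFlat R N) : IsLocallyContractible (i ∘ₗ p) := by
  refine isLocallyContractible_of_exists_section (comp_mul_comp_eq_zero_of_exact hexact)
    fun z hz ↦ ?_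
  have hpz : p z = 0 := hi (hz.trans (map_zero i).symm)
  obtain ⟨θ, hpθ, hθz⟩ := exists_end_fixing_of_isFlat hN hp hpz
  have hθ (x : M) : θ x ∈ (i ∘ₗ p).range := by
    rw [LinearMap.range_comp_of_range_eq_top i (LinearMap.range_eq_top.2 hp)]
    exact (hexact _).1 (hpθ x)
  obtain ⟨ψ, hψ⟩ := Module.projective_lifting_property (i ∘ₗ p).rangeRestrict
    (θ.codRestrict _ hθ) (LinearMap.surjective_rangeRestrict _)
  exact ⟨ψ, (congrArg Subtype.val (LinearMap.congr_fun hψ z)).trans hθz⟩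

theorem projective_of_homotopyDefect_eq_zero [Module.Projective R M]
    (hi : Function.Injective i) (hexact : Function.Exact i p) {h : Module.End R M}
    (hh : homotopyDefect (i ∘ₗ p) h = 0) : Module.Projective R N := by
  refine Module.Projective.of_split i (p ∘ₗ h) (LinearMap.ext fun y ↦ hi ?_)
  have contraction : i (p (h (i y))) + h (i (p (i y))) = i y :=
    mem_ker_homotopyDefect.1 (LinearMap.congr_fun hh (i y))
  rwa [hexact.apply_apply_eq_zero, map_zero i, map_zero h, add_zero] at contraction

end

theorem flat_projective_periodicity_general
    {R : Type*} [Ring R] {F P : Type*} [AddCommGroup F] [Module R F]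
    [AddCommGroup P] [Module R P]
    (i : F →ₗ[R] P) (p : P →ₗ[R] F)
    (hi : Function.Injective i) (hp : Function.Surjective p)
    (hexact : Function.Exact i p)
    (hF : Module.IsFlat R F) (hP : Module.Projective R P) :
    Module.Projective R F := by
  have hloc := isLocallyContractible_of_exact_of_isFlat hi hp hexact hF
  obtain ⟨h, hh⟩ := hloc.exists_homotopyDefect_eq_zero (comp_mul_comp_eq_zero_of_exact hexact)
  exact projective_of_homotopyDefect_eq_zero hi hexact hh

/-- **Benson–Goodearl flat/projective periodicity theorem.**
If `0 → F → P → F → 0` is a short exact sequence of left `R`-modules with `F` flat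
and `P` projective, then `F` is projective. -/
theorem flat_projective_periodicity
    {R : Type u} [Ring R] {F P : Type u} [AddCommGroup F] [Module R F]
    [AddCommGroup P] [Module R P]
    (i : F →ₗ[R] P) (p : P →ₗ[R] F)
    (hi : Function.Injective i) (hp : Function.Surjective p)
    (hexact : Function.Exact i p)
    (hF : Module.IsFlat R F) (hP : Module.Projective R P) :
    Module.Projective R F := by
  exact flat_projective_periodicity_general i p hi hp hexact hF hP
end

section
/- Let B be an abelian category with enough projective objects and all (small) coproducts, and let A• and B• be unbounded cochain complexes in B such that Ext^1_B(A^n, B^n) = 0 for every integer n. Then there is a natural isomorphism of abelian groups Ext^1_{Ch(B)}(A•, B•) ≅ Hom_{K(B)}(A•, B•[1]), where Ch(B) is the abelian category of unbounded cochain complexes in B, K(B) is the homotopy category of complexes in B (chain maps modulo chain homotopy), and B•[1] is the shift with (B•[1])^n = B^{n+1}. -/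
universe v u

open CategoryTheory Limits

/-- The `n`-th Ext group of two objects of an abelian category, defined via morphisms
in the derived category. -/
noncomputable def extType {C : Type u} [Category.{v} C] [Abelian C]
    (X Y : C) (n : ℕ) : Type (max u v) :=
  letI : HasDerivedCategory.{max u v} C := HasDerivedCategory.standard C
  letI : HasExt.{max u v} C := hasExt_of_hasDerivedCategory C
  Abelian.Ext X Y n

noncomputable instance extTypeAddCommGroup {C : Type u} [Category.{v} C] [Abelian C]
    (X Y : C) (n : ℕ) : AddCommGroup (extType X Y n) :=
  letI : HasDerivedCategory.{max u v} C := HasDerivedCategory.standard C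
  letI : HasExt.{max u v} C := hasExt_of_hasDerivedCategory C
  inferInstanceAs (AddCommGroup (Abelian.Ext X Y n))

/-!
Write `G` for the complex `B•`. The short exact sequence `0 ⟶ G ⟶ cone (𝟙 G) ⟶ G⟦1⟧ ⟶ 0` has a
connecting map `Hom(A, G⟦1⟧) → Ext¹(A, G)`, whose kernel consists of the maps factoring through
`cone (𝟙 G)`, that is, of the null-homotopic ones. It is surjective because `Ext¹(A, G)` dies in
`Ext¹(A, cone (𝟙 G))`: a class in `Ext¹(A, G)` vanishes on some epimorphism `P ⟶ A` with
kernel `K`, so it comes from a chain map `g : K ⟶ G`, and each `gⁿ` extends to `Pⁿ` since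
`Ext¹(Aⁿ, Gⁿ) = 0`. Chain maps into `cone (𝟙 G)` being just graded maps to `G`, these extensions
together extend `K ⟶ G ⟶ cone (𝟙 G)` to `P`.
-/

universe w w'

open Abelian

section AbelianCategory

variable {C : Type u} [Category.{v} C] [Abelian C]

lemma epi_f_comp_singleObjXSelf_hom_of_quasiIsoAt {ι : Type*} [DecidableEq ι] {c : ComplexShape ι}
    {K : HomologicalComplex C c} {X : C} {i : ι}
    (π : K ⟶ (HomologicalComplex.single C c i).obj X) (hπ : QuasiIsoAt π i) :
    Epi (π.f i ≫ (HomologicalComplex.singleObjXSelf c i X).hom) := by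
  let S := (HomologicalComplex.single C c i).obj X
  have : IsIso (S.iCycles i) := S.isIso_iCycles i _ rfl (by simp [S])
  have : IsIso (S.homologyπ i) := S.isIso_homologyπ _ i rfl (by simp [S])
  have fac : K.homologyπ i ≫ HomologicalComplex.homologyMap π i =
      HomologicalComplex.cyclesMap π i ≫ S.homologyπ i :=
    HomologicalComplex.homologyπ_naturality π i
  have : Epi (HomologicalComplex.cyclesMap π i ≫ S.homologyπ i) := fac ▸ epi_comp _ _
  have : Epi (HomologicalComplex.cyclesMap π i) := by
    rw [← Category.comp_id (HomologicalComplex.cyclesMap π i),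
      ← IsIso.hom_inv_id (S.homologyπ i), ← Category.assoc]
    infer_instance
  have : Epi (K.iCycles i ≫ π.f i) := HomologicalComplex.cyclesMap_i π i ▸ epi_comp _ _
  have : Epi (π.f i) := epi_of_epi (K.iCycles i) (π.f i)
  infer_instance

lemma exists_epi_map_singleFunctor_comp_eq_zero [HasDerivedCategory.{w} C] {X : C}
    {L : CochainComplex C ℤ} {i n : ℤ} (hn : n < i) [L.IsStrictlyLE n]
    (φ : DerivedCategory.Q.obj ((CochainComplex.singleFunctor C i).obj X) ⟶
      DerivedCategory.Q.obj L) :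
    ∃ (P : C) (p : P ⟶ X), Epi p ∧
      DerivedCategory.Q.map ((CochainComplex.singleFunctor C i).map p) ≫ φ = 0 := by
  -- As `K` vanishes above degree `i`, the object `K.X i` is both a subcomplex of `K`, on which `g`
  -- vanishes, and a cover of `X`.
  obtain ⟨K, _, π, hπ, g, rfl⟩ := DerivedCategory.right_fac_of_isStrictlyLE φ i
  rw [DerivedCategory.isIso_Q_map_iff_quasiIso] at hπ
  let p : K.X i ⟶ X := π.f i ≫ (HomologicalComplex.singleObjXSelf (ComplexShape.up ℤ) i X).hom
  let s : (CochainComplex.singleFunctor C i).obj (K.X i) ⟶ K :=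
    HomologicalComplex.mkHomFromSingle (𝟙 _) (by
      rintro _ rfl
      exact (K.isZero_of_isStrictlyLE i (i + 1) (by simp)).eq_of_tgt _ _)
  have hs : (CochainComplex.singleFunctor C i).map p = s ≫ π := by
    apply HomologicalComplex.from_single_hom_ext
    rw [HomologicalComplex.comp_f, HomologicalComplex.mkHomFromSingle_f]
    simp [p, CochainComplex.singleFunctor, CochainComplex.singleFunctors,
      HomologicalComplex.single_map_f_self]
  have hg : s ≫ g = 0 :=
    HomologicalComplex.from_single_hom_ext ((L.isZero_of_isStrictlyLE n i hn).eq_of_tgt _ _)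
  refine ⟨K.X i, p, epi_f_comp_singleObjXSelf_hom_of_quasiIsoAt π (hπ.quasiIsoAt i), ?_⟩
  rw [hs, Functor.map_comp, Category.assoc, IsIso.hom_inv_id_assoc, ← Functor.map_comp, hg,
    Functor.map_zero]

lemma exists_epi_mk₀_comp_eq_zero [HasExt.{w} C] {X Y : C} {n : ℕ} (e : Ext X Y (n + 1)) :
    ∃ (P : C) (p : P ⟶ X), Epi p ∧ (Ext.mk₀ p).comp e (zero_add _) = 0 := by
  let := HasDerivedCategory.standard C
  let unshift := ((DerivedCategory.singleFunctors C).shiftIso (n + 1) (-(n + 1)) 0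
    (by lia)).hom.app Y
  obtain ⟨P, p, hp, h⟩ := exists_epi_map_singleFunctor_comp_eq_zero (n := -(n + 1))
    (L := (CochainComplex.singleFunctor C (-(n + 1))).obj Y) (by lia) (e.hom ≫ unshift)
  refine ⟨P, p, hp, ?_⟩
  ext
  rw [← Ext.singleFunctor_map_comp_hom, Ext.zero_hom, ← cancel_mono unshift, Category.assoc,
    zero_comp]
  exact h

lemma exists_comp_eq_of_subsingleton_ext_one [HasExt.{w} C] {S : ShortComplex C}
    (hS : S.ShortExact) {Y : C} (hY : Subsingleton (Ext S.X₃ Y 1)) (g : S.X₁ ⟶ Y) :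
    ∃ g' : S.X₂ ⟶ Y, S.f ≫ g' = g := by
  obtain ⟨x, hx⟩ := Ext.contravariant_sequence_exact₁ hS Y (Ext.mk₀ g) (add_zero 1)
    (Subsingleton.elim _ _)
  obtain ⟨g', rfl⟩ := Ext.addEquiv₀.symm.surjective x
  exact ⟨g', Ext.addEquiv₀.symm.injective (by simpa using hx)⟩

lemma exists_extClass_comp_mk₀_eq [HasExt.{w} C] {X Y : C} (e : Ext X Y 1) :
    ∃ (K P : C) (i : K ⟶ P) (p : P ⟶ X) (w : i ≫ p = 0)
      (hS : (ShortComplex.mk i p w).ShortExact) (g : K ⟶ Y),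
      hS.extClass.comp (Ext.mk₀ g) (add_zero 1) = e := by
  obtain ⟨P, p, _, hp⟩ := exists_epi_mk₀_comp_eq_zero e
  let S := ShortComplex.mk (kernel.ι p) p (kernel.condition p)
  have hS : S.ShortExact :=
    { exact := ShortComplex.exact_of_f_is_kernel S (kernelIsKernel p) }
  obtain ⟨x, hx⟩ := Ext.contravariant_sequence_exact₃ hS Y e hp (add_zero 1)
  obtain ⟨g, rfl⟩ := Ext.addEquiv₀.symm.surjective x
  exact ⟨_, P, _, p, _, hS, g, hx⟩

variable [HasExt.{w} C] {S : ShortComplex C} (hS : S.ShortExact) (X : C)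

/-- The connecting homomorphism `Hom(X, S.X₃) → Ext¹(X, S.X₁)` of a short exact sequence, i.e.
composition with its class in `Ext¹(S.X₃, S.X₁)`. -/
noncomputable def homToExtOne : (X ⟶ S.X₃) →+ Ext X S.X₁ 1 :=
  (hS.extClass.postcomp X (zero_add 1)).comp Ext.addEquiv₀.symm.toAddMonoidHom

variable {X}

lemma homToExtOne_eq_zero_iff (f : X ⟶ S.X₃) :
    homToExtOne hS X f = 0 ↔ ∃ g : X ⟶ S.X₂, g ≫ S.g = f := by
  constructor
  · intro hf
    obtain ⟨x, hx⟩ := Ext.covariant_sequence_exact₃ X hS (Ext.mk₀ f) (zero_add 1) hf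
    obtain ⟨g, rfl⟩ := Ext.addEquiv₀.symm.surjective x
    exact ⟨g, Ext.addEquiv₀.symm.injective (by simpa using hx)⟩
  · rintro ⟨g, rfl⟩
    change (Ext.mk₀ (g ≫ S.g)).comp hS.extClass (zero_add 1) = 0
    rw [← Ext.mk₀_comp_mk₀_assoc, hS.comp_extClass, Ext.comp_zero]

lemma homToExtOne_surjective_of_comp_mk₀_eq_zero
    (H : ∀ e : Ext X S.X₁ 1, e.comp (Ext.mk₀ S.f) (add_zero 1) = 0) :
    Function.Surjective (homToExtOne hS X) := by
  intro e
  obtain ⟨x, hx⟩ := Ext.covariant_sequence_exact₁ X hS e (H e) (zero_add 1)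
  obtain ⟨f, rfl⟩ := Ext.addEquiv₀.symm.surjective x
  exact ⟨f, hx⟩

end AbelianCategory

section ConeOfIdentity

open CochainComplex HomComplex CochainComplex.mappingCone

section Preadditive

variable {C : Type u} [Category.{v} C] [Preadditive C] [HasBinaryBiproducts C]
  {K : CochainComplex C ℤ} (G : CochainComplex C ℤ)

/-- Chain maps into the cone of the identity of `G` are graded maps to `G`, through the second
component of the cone: the first component is forced to be minus the differential of the second. -/
noncomputable def homToConeIdEquiv : (K ⟶ mappingCone (𝟙 G)) ≃ Cochain K G 0 where
  toFun f := (Cochain.ofHom f).comp (snd (𝟙 G)) (add_zero 0)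
  invFun β := lift (𝟙 G) (Cocycle.mk (-δ 0 1 β) 2 (by norm_num) (by simp [δ_δ])) β (by simp)
  left_inv f := by
    apply Cochain.ofHom_injective
    simp [ext_cochain_to_iff _ _ _ (zero_add 1)]
  right_inv β := lift_snd _ _ _ _

/-- The short complex `G ⟶ cone (𝟙 G) ⟶ G⟦1⟧`. The second map is the degree one cocycle
`-fst (𝟙 G)`, with Mathlib's sign convention for the standard triangle. -/
noncomputable abbrev coneIdShortComplex : ShortComplex (CochainComplex C ℤ) :=
  ShortComplex.mk (inr (𝟙 G)) (Cocycle.equivHomShift.symm (-fst (𝟙 G))) (inr_triangleδ (𝟙 G))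

variable {G}

lemma equivHomShift_comp_coneIdShortComplex_g (f : K ⟶ mappingCone (𝟙 G)) :
    (Cocycle.equivHomShift (f ≫ (coneIdShortComplex G).g)).1 = δ 0 1 (homToConeIdEquiv G f) := by
  rw [← Cocycle.equivHomShift_symm_precomp, AddEquiv.apply_symm_apply]
  simp [homToConeIdEquiv]

lemma quotient_map_eq_zero_iff_exists_comp_eq (f : K ⟶ G⟦(1 : ℤ)⟧) :
    (HomotopyCategory.quotient C (ComplexShape.up ℤ)).map f = 0 ↔
      ∃ g : K ⟶ mappingCone (𝟙 G), g ≫ (coneIdShortComplex G).g = f := by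
  have h := CohomologyClass.toHom_mk_eq_zero_iff (Cocycle.equivHomShift f)
  rw [CohomologyClass.toHom_mk, AddEquiv.symm_apply_apply] at h
  rw [h, mem_coboundaries_iff _ 0 (zero_add 1), ← (homToConeIdEquiv G).exists_congr_right]
  refine exists_congr fun g => ?_
  rw [← equivHomShift_comp_coneIdShortComplex_g, ← Cocycle.ext_iff,
    EmbeddingLike.apply_eq_iff_eq]

end Preadditive

section Abelian

variable {C : Type u} [Category.{v} C] [Abelian C]

lemma shortExact_coneIdShortComplex (G : CochainComplex C ℤ) : (coneIdShortComplex G).ShortExact :=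
  HomologicalComplex.shortExact_of_degreewise_shortExact _
    fun n => (triangleRotateShortComplexSplitting (𝟙 G) n).shortExact

lemma exists_comp_eq_comp_inr_id [HasExt.{w} C] {S : ShortComplex (CochainComplex C ℤ)}
    (hS : S.ShortExact) {G : CochainComplex C ℤ}
    (hG : ∀ n, Subsingleton (Ext (S.X₃.X n) (G.X n) 1)) (g : S.X₁ ⟶ G) :
    ∃ g' : S.X₂ ⟶ mappingCone (𝟙 G), S.f ≫ g' = g ≫ inr (𝟙 G) := by
  have extend (n : ℤ) : ∃ r : S.X₂.X n ⟶ G.X n, S.f.f n ≫ r = g.f n :=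
    exists_comp_eq_of_subsingleton_ext_one
      (hS.map_of_exact (HomologicalComplex.eval C (ComplexShape.up ℤ) n)) (hG n) (g.f n)
  choose r hr using extend
  refine ⟨(homToConeIdEquiv G).symm (Cochain.ofHoms r), (homToConeIdEquiv G).injective ?_⟩
  ext n
  simp [homToConeIdEquiv, hr]

lemma comp_mk₀_inr_id_eq_zero [HasExt.{w} C] [HasExt.{w'} (CochainComplex C ℤ)]
    {A G : CochainComplex C ℤ} (hAG : ∀ n, Subsingleton (Ext (A.X n) (G.X n) 1))
    (e : Ext A G 1) : e.comp (Ext.mk₀ (inr (𝟙 G))) (add_zero 1) = 0 := by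
  obtain ⟨K, P, i, p, w, hS, g, rfl⟩ := exists_extClass_comp_mk₀_eq e
  obtain ⟨g', hg'⟩ := exists_comp_eq_comp_inr_id hS hAG g
  rw [Ext.comp_assoc_of_third_deg_zero, Ext.mk₀_comp_mk₀, ← hg', ← Ext.mk₀_comp_mk₀,
    hS.extClass_comp_assoc]

end Abelian

end ConeOfIdentity

theorem ext_one_iso_homotopy_hom_general
    {B : Type u} [Category.{v} B] [Abelian B]
    (A Bc : CochainComplex B ℤ)
    (h : ∀ n : ℤ, Subsingleton (extType (A.X n) (Bc.X n) 1)) :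
    Nonempty (extType A Bc 1 ≃+
      ((HomotopyCategory.quotient B (ComplexShape.up ℤ)).obj A ⟶
        (HomotopyCategory.quotient B (ComplexShape.up ℤ)).obj (Bc⟦(1 : ℤ)⟧))) := by
  let : HasDerivedCategory.{max u v} B := HasDerivedCategory.standard B
  let : HasExt.{max u v} B := hasExt_of_hasDerivedCategory B
  let : HasDerivedCategory.{max u v} (CochainComplex B ℤ) := HasDerivedCategory.standard _
  let : HasExt.{max u v} (CochainComplex B ℤ) := hasExt_of_hasDerivedCategory _
  let toHomotopy :=
    (HomotopyCategory.quotient B (ComplexShape.up ℤ)).mapAddHom (X := A) (Y := Bc⟦(1 : ℤ)⟧)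
  let toExt := homToExtOne (shortExact_coneIdShortComplex Bc) A
  have toHomotopy_surjective : Function.Surjective toHomotopy :=
    (HomotopyCategory.quotient B (ComplexShape.up ℤ)).map_surjective
  have toExt_surjective : Function.Surjective toExt :=
    homToExtOne_surjective_of_comp_mk₀_eq_zero _ (comp_mk₀_inr_id_eq_zero h)
  have ker_eq : toExt.ker = toHomotopy.ker := AddSubgroup.ext fun f =>
    (homToExtOne_eq_zero_iff _ f).trans (quotient_map_eq_zero_iff_exists_comp_eq f).symm
  exact ⟨(QuotientAddGroup.quotientKerEquivOfSurjective toExt toExt_surjective).symm.trans <|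
    (QuotientAddGroup.quotientAddEquivOfEq ker_eq).trans <|
    QuotientAddGroup.quotientKerEquivOfSurjective toHomotopy toHomotopy_surjective⟩

/-- Let `B` be an abelian category with enough projectives and all small coproducts,
and let `A•`, `B•` be complexes in `B` with `Ext¹_B(Aⁿ, Bⁿ) = 0` for all `n`.  Then
there is an isomorphism of abelian groups
`Ext¹_{Ch(B)}(A•, B•) ≅ Hom_{K(B)}(A•, B•[1])`. -/
theorem ext_one_iso_homotopy_hom
    {B : Type u} [Category.{v} B] [Abelian B] [EnoughProjectives B]
    [HasCoproducts.{v} B]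
    (A Bc : CochainComplex B ℤ)
    (h : ∀ n : ℤ, Subsingleton (extType (A.X n) (Bc.X n) 1)) :
    Nonempty (extType A Bc 1 ≃+
      ((HomotopyCategory.quotient B (ComplexShape.up ℤ)).obj A ⟶
        (HomotopyCategory.quotient B (ComplexShape.up ℤ)).obj (Bc⟦(1 : ℤ)⟧))) := by
  exact ext_one_iso_homotopy_hom_general A Bc h
end
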